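/- arXiv:0809.0159 — 3 statements merged into one kernel-verified Lean document; each statement's English description precedes it below -/
import Mathlib

section
/- Let f : ℝ → ℝ be a terrain, G ⊆ ℝ a finite set of guards and N ⊆ ℝ a finite set of points such that every p ∈ N is seen from the left by some guard in G; for p ∈ N let L(p) denote the leftmost guard of G that sees p from the left. Let X ⊆ N be such that for all p, q ∈ X with p < q, L(p) does not see q. Then no guard g ∈ G sees two distinct points of X from the left; consequently, every set A ⊆ G such that each point of X is seen from the left by some guard of A satisfies |A| ≥ |X|. -/
/-- `a` sees `b` on the terrain `f`. -/
def Sees (f : ℝ → ℝ) (a b : ℝ) : Prop :=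
  ∀ t ∈ Set.Icc (0:ℝ) 1, f ((1 - t) * a + t * b) ≤ (1 - t) * f a + t * f b

/-- A guard `g` sees a point `p` from the left. -/
def SeesLeft (f : ℝ → ℝ) (g p : ℝ) : Prop := g < p ∧ Sees f g p

/-!
The heart of the matter is the order claim for terrains: if `l ≤ g < p ≤ q`, `l` sees `p` and `g`
sees `q`, then `l` sees `q`. Visibility does not change when an affine function is subtracted from
the terrain, so the chord from `l` to `q` may be taken to be the zero function. The two crossing
lines of sight then bound the height at `g` by a fraction of the height at `p` and vice versa. The
product of the two fractions is less than `1`, so neither height is positive, and both lines of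
sight, which together span `[l, q]`, stay below the chord.

If a guard `g` saw two points `p < q` of `X` from the left, then `L p ≤ g` because `L p` is
leftmost, and the order claim would make `L p` see `q`, which is excluded. Hence choosing for each
point of `X` a guard of `A` that sees it from the left is injective.
-/

section Visibility

variable {f : ℝ → ℝ} {a b l g p q x : ℝ}

lemma sees_sub_affine_iff (m c : ℝ) :
    Sees (fun x => f x - (m * x + c)) a b ↔ Sees f a b := by
  refine forall₂_congr fun t _ => ?_
  have chord_sub : (1 - t) * (f a - (m * a + c)) + t * (f b - (m * b + c)) =
      (1 - t) * f a + t * f b - (m * ((1 - t) * a + t * b) + c) := by ring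
  rw [chord_sub, sub_le_sub_iff_right]

lemma Sees.mul_apply_le (h : Sees f a b) (hx : x ∈ Set.Icc a b) :
    (b - a) * f x ≤ (b - x) * f a + (x - a) * f b := by
  have hab : a ≤ b := hx.1.trans hx.2
  rw [← segment_eq_Icc hab, segment_eq_image] at hx
  obtain ⟨t, ht, rfl⟩ := hx
  simp only [smul_eq_mul]
  calc (b - a) * f ((1 - t) * a + t * b)
      ≤ (b - a) * ((1 - t) * f a + t * f b) :=
        mul_le_mul_of_nonneg_left (h t ht) (sub_nonneg.2 hab)
    _ = _ := by ring

lemma sees_of_nonpos (hab : a ≤ b) (ha : f a = 0) (hb : f b = 0)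
    (hf : ∀ x ∈ Set.Icc a b, f x ≤ 0) : Sees f a b := by
  intro t ht
  rw [ha, hb, mul_zero, mul_zero, add_zero]
  refine hf _ ?_
  rw [← segment_eq_Icc hab, segment_eq_image]
  exact ⟨t, ht, rfl⟩

lemma Sees.apply_nonpos (h : Sees f a b) (ha : f a ≤ 0) (hb : f b ≤ 0) (hx : x ∈ Set.Icc a b) :
    f x ≤ 0 := by
  rw [← segment_eq_Icc (hx.1.trans hx.2), segment_eq_image] at hx
  obtain ⟨t, ht, rfl⟩ := hx
  exact (h t ht).trans <| add_nonpos
    (mul_nonpos_of_nonneg_of_nonpos (sub_nonneg.2 ht.2) ha) (mul_nonpos_of_nonneg_of_nonpos ht.1 hb)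

lemma Sees.right_nonpos_of_crossing (hlp : Sees f l p) (hgq : Sees f g q)
    (hlg : l ≤ g) (hgp : g < p) (hpq : p ≤ q) (hl : f l ≤ 0) (hq : f q ≤ 0) : f p ≤ 0 := by
  have height_g : (p - l) * f g ≤ (g - l) * f p :=
    (hlp.mul_apply_le ⟨hlg, hgp.le⟩).trans <|
      add_le_of_nonpos_left (mul_nonpos_of_nonneg_of_nonpos (sub_nonneg.2 hgp.le) hl)
  have height_p : (q - g) * f p ≤ (q - p) * f g :=
    (hgq.mul_apply_le ⟨hgp.le, hpq⟩).trans <|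
      add_le_of_nonpos_right (mul_nonpos_of_nonneg_of_nonpos (sub_nonneg.2 hgp.le) hq)
  have height_p_le_self : (p - l) * (q - g) * f p ≤ (g - l) * (q - p) * f p :=
    calc (p - l) * (q - g) * f p = (p - l) * ((q - g) * f p) := mul_assoc ..
      _ ≤ (p - l) * ((q - p) * f g) :=
        mul_le_mul_of_nonneg_left height_p (sub_nonneg.2 (hlg.trans hgp.le))
      _ = (q - p) * ((p - l) * f g) := mul_left_comm ..
      _ ≤ (q - p) * ((g - l) * f p) := mul_le_mul_of_nonneg_left height_g (sub_nonneg.2 hpq)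
      _ = (g - l) * (q - p) * f p := by ring
  have factor_lt : (g - l) * (q - p) < (p - l) * (q - g) :=
    mul_lt_mul'' (by linarith) (by linarith) (sub_nonneg.2 hlg) (sub_nonneg.2 hpq)
  exact le_of_not_gt fun hpos => height_p_le_self.not_gt (mul_lt_mul_of_pos_right factor_lt hpos)

lemma Sees.apply_nonpos_of_crossing (hlp : Sees f l p) (hgq : Sees f g q)
    (hlg : l ≤ g) (hgp : g < p) (hpq : p ≤ q) (hl : f l ≤ 0) (hq : f q ≤ 0)
    (hx : x ∈ Set.Icc l q) : f x ≤ 0 := by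
  have hp : f p ≤ 0 := hlp.right_nonpos_of_crossing hgq hlg hgp hpq hl hq
  have hg : f g ≤ 0 := hlp.apply_nonpos hl hp ⟨hlg, hgp.le⟩
  rcases le_total x p with hxp | hpx
  · exact hlp.apply_nonpos hl hp ⟨hx.1, hxp⟩
  · exact hgq.apply_nonpos hg hq ⟨hgp.le.trans hpx, hx.2⟩

theorem Sees.of_crossing (hlp : Sees f l p) (hgq : Sees f g q)
    (hlg : l ≤ g) (hgp : g < p) (hpq : p ≤ q) : Sees f l q := by
  have hlq : l < q := (hlg.trans_lt hgp).trans_le hpq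
  obtain ⟨m, c, hl, hq⟩ : ∃ m c : ℝ, f l - (m * l + c) = 0 ∧ f q - (m * q + c) = 0 := by
    have hne : q - l ≠ 0 := (sub_pos.2 hlq).ne'
    refine ⟨(f q - f l) / (q - l), f l - (f q - f l) / (q - l) * l, by ring, ?_⟩
    field_simp
    ring
  rw [← sees_sub_affine_iff m c] at hlp hgq ⊢
  exact sees_of_nonpos hlq.le hl hq fun x hx =>
    hlp.apply_nonpos_of_crossing hgq hlg hgp hpq hl.le hq.le hx

lemma SeesLeft.sees_of_isLeast {G : Set ℝ} (hl : IsLeast {g ∈ G | SeesLeft f g p} l)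
    (hg : g ∈ G) (hgp : SeesLeft f g p) (hgq : SeesLeft f g q) (hpq : p ≤ q) : Sees f l q :=
  hl.1.2.2.of_crossing hgq.2 (hl.2 ⟨hg, hgp⟩) hgp.1 hpq

end Visibility

lemma mk_le_mk_of_forall_subsingleton.{u} {α β : Type u} {r : α → β → Prop}
    {s : Set α} {t : Set β}
    (hs : ∀ a ∈ s, ∃ b ∈ t, r a b) (ht : ∀ b ∈ t, {a ∈ s | r a b}.Subsingleton) :
    Cardinal.mk s ≤ Cardinal.mk t := by
  choose w hwt hw using hs
  refine Cardinal.mk_le_of_injective (f := fun a : s => (⟨w a a.2, hwt a a.2⟩ : t)) ?_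
  rintro ⟨a, ha⟩ ⟨b, hb⟩ hab
  have hw_eq : w a ha = w b hb := congrArg Subtype.val hab
  exact Subtype.ext (ht _ (hwt a ha) ⟨ha, hw a ha⟩ ⟨hb, hw_eq ▸ hw b hb⟩)

theorem greedy_witness_lower_bound_general (f : ℝ → ℝ) (G : Set ℝ) (L : ℝ → ℝ) (X : Set ℝ)
    (hL : ∀ p ∈ X, IsLeast {g ∈ G | SeesLeft f g p} (L p))
    (hX : ∀ p ∈ X, ∀ q ∈ X, p < q → ¬ Sees f (L p) q) :
    (∀ g ∈ G, {p ∈ X | SeesLeft f g p}.Subsingleton) ∧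
    (∀ A ⊆ G, (∀ p ∈ X, ∃ g ∈ A, SeesLeft f g p) → Cardinal.mk X ≤ Cardinal.mk A) := by
  have not_seesLeft_of_lt : ∀ g ∈ G, ∀ p ∈ X, ∀ q ∈ X, p < q →
      SeesLeft f g p → ¬ SeesLeft f g q :=
    fun g hg p hp q hq hpq hgp hgq =>
      hX p hp q hq hpq (SeesLeft.sees_of_isLeast (hL p hp) hg hgp hgq hpq.le)
  have subsingleton : ∀ g ∈ G, {p ∈ X | SeesLeft f g p}.Subsingleton :=
    fun g hg p ⟨hp, hgp⟩ q ⟨hq, hgq⟩ =>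
      le_antisymm
        (le_of_not_gt fun hqp => not_seesLeft_of_lt g hg q hq p hp hqp hgq hgp)
        (le_of_not_gt fun hpq => not_seesLeft_of_lt g hg p hp q hq hpq hgp hgq)
  exact ⟨subsingleton, fun A hAG hA =>
    mk_le_mk_of_forall_subsingleton hA fun g hg => subsingleton g (hAG hg)⟩

/-- Every guard sees at most one point of the witness set `X` from the left, hence
any left-guarding set for `X` has cardinality at least `|X|`. -/
theorem greedy_witness_lower_bound (f : ℝ → ℝ) (G N : Finset ℝ)
    (hcov : ∀ p ∈ N, ∃ g ∈ G, SeesLeft f g p)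
    (L : ℝ → ℝ)
    (hL : ∀ p ∈ N, L p ∈ G ∧ SeesLeft f (L p) p ∧ ∀ g ∈ G, SeesLeft f g p → L p ≤ g)
    (X : Finset ℝ) (hXN : X ⊆ N)
    (hX : ∀ p ∈ X, ∀ q ∈ X, p < q → ¬ Sees f (L p) q) :
    (∀ g ∈ G, ∀ p ∈ X, ∀ q ∈ X, p ≠ q →
        ¬ (SeesLeft f g p ∧ SeesLeft f g q)) ∧
    (∀ A ⊆ G, (∀ p ∈ X, ∃ g ∈ A, SeesLeft f g p) → X.card ≤ A.card) := by
  obtain ⟨subsingleton, card_le⟩ := greedy_witness_lower_bound_general f G L X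
    (fun p hp => by simpa [IsLeast, lowerBounds, and_assoc] using hL p (hXN hp)) hX
  exact ⟨fun g hg p hp q hq hpq h => hpq (subsingleton g hg ⟨hp, h.1⟩ ⟨hq, h.2⟩),
    fun A hAG hA => by simpa using card_le A hAG hA⟩
end

section
/- Let f : ℝ → ℝ be a terrain, G ⊆ ℝ a finite set of guards and N ⊆ ℝ a finite set of points such that every p ∈ N is seen from the left by some guard in G. Then the minimum cardinality of a set A ⊆ G such that every p ∈ N is seen from the left by some guard in A equals the maximum cardinality of a set X ⊆ N such that no guard in G sees two distinct points of X from the left. -/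
/-!
Call the points seen by a guard its neighbourhood. If `a < b < c < d`, `a` sees `c` and `b` sees
`d`, then `a` sees `d`. Hence, among the guards seeing a point `p` from the left, the
neighbourhoods beyond `p` are nested: the further left a guard stands, the more it sees.

For any relation with this nesting property, the greedy algorithm produces a cover and an
independent set of the same size, which weak duality makes both optimal: take the least point `p`
and a guard `g` of largest neighbourhood among the guards seeing `p`, put `g` into the cover and
`p` into the independent set, and discard all points seen by `g`. No guard seeing `p` sees a point
that remains.
-/

section Duality

variable {α β : Type*} {R : α → β → Prop}

/-- Every point of `N` is related to a guard in `A`: the feasible sets of the minimization problem,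
for an arbitrary relation `R` between guards and points. -/
def Covers (R : α → β → Prop) (A : Set α) (N : Set β) : Prop :=
  ∀ p ∈ N, ∃ g ∈ A, R g p

/-- No guard in `G` is related to two distinct points of `X`: the feasible sets of the maximization
problem. -/
def IsIndependent (R : α → β → Prop) (G : Set α) (X : Set β) : Prop :=
  ∀ g ∈ G, X.Pairwise fun p q => ¬(R g p ∧ R g q)

/-- Among the guards related to `p`, the neighbourhoods within `[p, ∞)` form a chain under
inclusion. In the language of bipartite graphs, the order on `β` is a simple elimination
ordering. -/
def IsRightNested [LE β] (R : α → β → Prop) : Prop :=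
  ∀ ⦃g g' p⦄, R g p → R g' p →
    (∀ q ≥ p, R g q → R g' q) ∨ (∀ q ≥ p, R g' q → R g q)

lemma Covers.mono_right {A : Set α} {M N : Set β} (h : Covers R A N) (hMN : M ⊆ N) :
    Covers R A M :=
  fun p hp => h p (hMN hp)

lemma Covers.insert {A : Set α} {N : Set β} {g : α} (h : Covers R A {q ∈ N | ¬R g q}) :
    Covers R (insert g A) N := by
  intro q hq
  by_cases hgq : R g q
  · exact ⟨g, Set.mem_insert g A, hgq⟩
  · obtain ⟨g', hg', hg'q⟩ := h q ⟨hq, hgq⟩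
    exact ⟨g', Set.mem_insert_of_mem g hg', hg'q⟩

lemma IsIndependent.anti_left {A G : Set α} {X : Set β} (h : IsIndependent R G X) (hAG : A ⊆ G) :
    IsIndependent R A X :=
  fun g hg => h g (hAG hg)

lemma IsIndependent.insert {G : Set α} {X : Set β} {p : β} (h : IsIndependent R G X)
    (hp : ∀ g ∈ G, R g p → ∀ q ∈ X, ¬R g q) : IsIndependent R G (insert p X) :=
  fun g hg => (h g hg).insert fun q hq _ =>
    ⟨fun hgpq => hp g hg hgpq.1 q hq hgpq.2, fun hgqp => hp g hg hgqp.2 q hq hgqp.1⟩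

lemma IsIndependent.card_le_card {A : Finset α} {X : Finset β} (hX : IsIndependent R A X)
    (hA : Covers R A X) : X.card ≤ A.card :=
  Finset.card_le_card_of_forall_subsingleton (fun p g => R g p) hA
    fun g hg _ hp _ hq => by_contra fun hpq => hX g hg hp.1 hq.1 hpq ⟨hp.2, hq.2⟩

variable [LinearOrder β]

lemma IsRightNested.exists_dominating (hR : IsRightNested R) {G : Set α} {N : Finset β}
    (hN : N.Nonempty) (hcov : Covers R G N) :
    ∃ p ∈ N, ∃ g ∈ G, R g p ∧ ∀ g' ∈ G, R g' p → ∀ q ∈ N, R g' q → R g q := by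
  let neighbors (g : α) : Set β := {q ∈ N | R g q}
  have hfin : (neighbors '' {g ∈ G | R g (N.min' hN)}).Finite :=
    N.finite_toSet.finite_subsets.subset
      (Set.image_subset_iff.2 fun _ _ => Set.sep_subset _ _)
  obtain ⟨g, ⟨hgG, hgp⟩, hmax⟩ :=
    Set.Finite.exists_maximalFor' neighbors _ hfin (hcov _ (N.min'_mem hN))
  refine ⟨N.min' hN, N.min'_mem hN, g, hgG, hgp, fun g' hg'G hg'p q hq hg'q => ?_⟩
  rcases hR hgp hg'p with hle | hge
  · have hsub : neighbors g ⊆ neighbors g' :=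
      fun r hr => ⟨hr.1, hle r (N.min'_le r hr.1) hr.2⟩
    exact (hmax ⟨hg'G, hg'p⟩ hsub ⟨hq, hg'q⟩).2
  · exact hge q (N.min'_le q hq) hg'q

lemma IsRightNested.exists_cover_card_le_independent (hR : IsRightNested R) {G : Set α}
    {N : Finset β} (hcov : Covers R G N) :
    ∃ A : Finset α, ↑A ⊆ G ∧ ∃ X ⊆ N,
      Covers R A N ∧ IsIndependent R G X ∧ A.card ≤ X.card := by
  classical
  induction N using Finset.strongInduction with
  | H N ih =>
    rcases N.eq_empty_or_nonempty with rfl | hN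
    · exact ⟨∅, by simp, ∅, by simp, by simp [Covers], by simp [IsIndependent], le_rfl⟩
    obtain ⟨p, hp, g, hg, hgp, hdom⟩ := hR.exists_dominating hN hcov
    have hlt : {q ∈ N | ¬R g q} ⊂ N := Finset.filter_ssubset.2 ⟨p, hp, not_not.2 hgp⟩
    obtain ⟨A, hA, X, hX, hAcov, hXind, hcard⟩ := ih _ hlt (hcov.mono_right hlt.subset)
    have hunseen : ∀ q ∈ X, q ∈ N ∧ ¬R g q := fun q hq => Finset.mem_filter.1 (hX hq)
    have hpX : p ∉ X := fun hpX => (hunseen p hpX).2 hgp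
    refine ⟨insert g A, ?_, insert p X, Finset.insert_subset hp (hX.trans hlt.subset), ?_, ?_, ?_⟩
    · simpa only [Finset.coe_insert] using Set.insert_subset hg hA
    · rw [Finset.coe_filter] at hAcov
      simpa only [Finset.coe_insert] using hAcov.insert
    · rw [Finset.coe_insert]
      exact hXind.insert fun g' hg' hg'p q hq hg'q =>
        (hunseen q hq).2 (hdom g' hg' hg'p q (hunseen q hq).1 hg'q)
    · calc (insert g A).card ≤ A.card + 1 := Finset.card_insert_le g A
        _ ≤ X.card + 1 := Nat.succ_le_succ hcard
        _ = (insert p X).card := (Finset.card_insert_of_notMem hpX).symm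

theorem left_guarding_min_eq_max_general (hR : IsRightNested R) (G : Set α) (N : Finset β)
    (hcov : Covers R G N) :
    ∃ A : Finset α, ↑A ⊆ G ∧ ∃ X ⊆ N,
      Covers R A N ∧ IsIndependent R G X ∧ A.card = X.card ∧
      (∀ A' : Finset α, ↑A' ⊆ G → Covers R A' N → A.card ≤ A'.card) ∧
      (∀ X' ⊆ N, IsIndependent R G X' → X'.card ≤ X.card) := by
  obtain ⟨A, hA, X, hX, hAcov, hXind, hcard⟩ := hR.exists_cover_card_le_independent hcov
  have weak_duality {A' : Finset α} {X' : Finset β} (hA' : ↑A' ⊆ G) (hX' : X' ⊆ N)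
      (hA'cov : Covers R A' N) (hX'ind : IsIndependent R G X') : X'.card ≤ A'.card :=
    (hX'ind.anti_left hA').card_le_card (hA'cov.mono_right hX')
  exact ⟨A, hA, X, hX, hAcov, hXind, hcard.antisymm (weak_duality hA hX hAcov hXind),
    fun A' hA' hA'cov => hcard.trans (weak_duality hA' hX hA'cov hXind),
    fun X' hX' hX'ind => (weak_duality hA hX' hAcov hX'ind).trans hcard⟩

end Duality

section Visibility

variable {f : ℝ → ℝ} {a b c d x : ℝ}

lemma exists_convex_combination_of_mem_Icc (hx : x ∈ Set.Icc a b) :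
    ∃ t ∈ Set.Icc (0 : ℝ) 1, (1 - t) * a + t * b = x := by
  simpa [segment_eq_image] using Icc_subset_segment hx

lemma Sees.le_max (h : Sees f a b) (hx : x ∈ Set.Icc a b) : f x ≤ max (f a) (f b) := by
  obtain ⟨t, ht, rfl⟩ := exists_convex_combination_of_mem_Icc hx
  exact (h t ht).trans
    (Convex.combo_le_max (f a) (f b) (sub_nonneg.2 ht.2) ht.1 (sub_add_cancel 1 t))

lemma Sees.lt_right (h : Sees f a b) (hx : x ∈ Set.Ico a b) (hf : f a < f b) : f x < f b := by
  obtain ⟨t, ht, rfl⟩ := exists_convex_combination_of_mem_Icc (Set.Ico_subset_Icc_self hx)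
  have ht1 : t < 1 := ht.2.lt_of_ne fun h1 => by simp [h1] at hx
  calc f ((1 - t) * a + t * b) ≤ (1 - t) * f a + t * f b := h t ht
    _ < (1 - t) * f b + t * f b := by gcongr
    _ = f b := by ring

lemma sees_of_forall_le (hab : a ≤ b) (hf : f a = f b) (h : ∀ x ∈ Set.Icc a b, f x ≤ f a) :
    Sees f a b := by
  intro t ht
  have hmem : (1 - t) * a + t * b ∈ Set.Icc a b :=
    convex_Icc a b (Set.left_mem_Icc.2 hab) (Set.right_mem_Icc.2 hab)
      (sub_nonneg.2 ht.2) ht.1 (sub_add_cancel 1 t)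
  calc f ((1 - t) * a + t * b) ≤ f a := h _ hmem
    _ = (1 - t) * f a + t * f b := by rw [← hf]; ring

lemma sees_sub_mul_iff (m : ℝ) : Sees (fun x => f x - m * x) a b ↔ Sees f a b := by
  refine forall₂_congr fun t _ => ?_
  rw [← sub_nonneg, ← sub_nonneg (b := f _)]
  ring_nf

lemma Sees.of_crossing_of_eq (hab : a < b) (hbc : b < c) (hcd : c < d) (hac : Sees f a c)
    (hbd : Sees f b d) (hf : f a = f d) : Sees f a d := by
  have hc : f c ≤ f a := by
    by_contra! hlt
    have hcb : f c ≤ f b :=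
      (le_max_iff.1 (hbd.le_max ⟨hbc.le, hcd.le⟩)).resolve_right (hf ▸ hlt.not_ge)
    exact hcb.not_gt (hac.lt_right ⟨hab.le, hbc⟩ hlt)
  have hle : ∀ x ∈ Set.Icc a c, f x ≤ f a := fun x hx => (hac.le_max hx).trans (max_le le_rfl hc)
  refine sees_of_forall_le (hab.trans (hbc.trans hcd)).le hf fun x hx => ?_
  rcases le_total x c with hxc | hcx
  · exact hle x ⟨hx.1, hxc⟩
  · exact (hbd.le_max ⟨hbc.le.trans hcx, hx.2⟩).trans (max_le (hle b ⟨hab.le, hbc.le⟩) hf.ge)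

lemma Sees.of_crossing_s5 (hab : a < b) (hbc : b < c) (hcd : c < d) (hac : Sees f a c)
    (hbd : Sees f b d) : Sees f a d := by
  -- Subtracting the linear function of slope `m` brings `a` and `d` to the same height.
  let m := (f d - f a) / (d - a)
  have hm : f a - m * a = f d - m * d := by
    have hda : d - a ≠ 0 := (sub_pos.2 (hab.trans (hbc.trans hcd))).ne'
    linear_combination div_mul_cancel₀ (f d - f a) hda
  exact (sees_sub_mul_iff m).1 (Sees.of_crossing_of_eq hab hbc hcd
    ((sees_sub_mul_iff m).2 hac) ((sees_sub_mul_iff m).2 hbd) hm)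

lemma SeesLeft.of_le_of_le {g g' p q : ℝ} (hgg' : g ≤ g') (hpq : p ≤ q) (hgp : SeesLeft f g p)
    (hg'p : SeesLeft f g' p) (hg'q : SeesLeft f g' q) : SeesLeft f g q := by
  rcases hgg'.eq_or_lt with rfl | hgg'
  · exact hg'q
  rcases hpq.eq_or_lt with rfl | hpq
  · exact hgp
  exact ⟨hgp.1.trans hpq, Sees.of_crossing_s5 hgg' hg'p.1 hpq hgp.2 hg'q.2⟩

lemma isRightNested_seesLeft (f : ℝ → ℝ) : IsRightNested (SeesLeft f) := by
  intro g g' p hgp hg'p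
  rcases le_total g g' with hle | hle
  · exact .inr fun q hpq hg'q => .of_le_of_le hle hpq hgp hg'p hg'q
  · exact .inl fun q hpq hgq => .of_le_of_le hle hpq hg'p hgp hgq

end Visibility

/-- Min–max duality for left-guarding: the minimum size of a left-guarding set
equals the maximum size of a set of points no two of which are seen from the
left by a common guard. -/
theorem left_guarding_min_eq_max (f : ℝ → ℝ) (G N : Finset ℝ)
    (hcov : ∀ p ∈ N, ∃ g ∈ G, SeesLeft f g p) :
    ∃ A ⊆ G, ∃ X ⊆ N,
      (∀ p ∈ N, ∃ g ∈ A, SeesLeft f g p) ∧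
      (∀ g ∈ G, ∀ p ∈ X, ∀ q ∈ X, p ≠ q →
          ¬ (SeesLeft f g p ∧ SeesLeft f g q)) ∧
      A.card = X.card ∧
      (∀ A' ⊆ G, (∀ p ∈ N, ∃ g ∈ A', SeesLeft f g p) → A.card ≤ A'.card) ∧
      (∀ X' ⊆ N, (∀ g ∈ G, ∀ p ∈ X', ∀ q ∈ X', p ≠ q →
          ¬ (SeesLeft f g p ∧ SeesLeft f g q)) → X'.card ≤ X.card) := by
  simpa only [Finset.coe_subset, Covers, IsIndependent, Set.Pairwise, Finset.mem_coe] using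
    left_guarding_min_eq_max_general (isRightNested_seesLeft f) (G : Set ℝ) N hcov
end

section
/- The linear programming relaxation of the left-guarding problem is integral: let f : ℝ → ℝ be a terrain, G ⊆ ℝ a finite set of guards with nonnegative weights w : G → ℝ, N ⊆ ℝ a finite set of points, and let x : G → ℝ satisfy x(g) ≥ 0 for all g ∈ G and, for every p ∈ N, Σ_{g ∈ G, g < p, g sees p} x(g) ≥ 1. Then there exists A ⊆ G such that every p ∈ N is seen from the left by some guard in A and Σ_{g ∈ A} w(g) ≤ Σ_{g ∈ G} w(g)·x(g). -/
/-!
Order claim: if `a ≤ b < c ≤ d`, `a` sees `c` and `b` sees `d`, then `a` sees `d`, because the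
chord from `a` to `d` lies above both other chords. Hence, among the guards seeing a point `p`
from the left, one further left sees every point right of `p` that one further right sees.

Integrality follows by a local-ratio induction that splits off the leftmost point `p`. Let `ε` be
the least weight of a guard seeing `p`, attained at `g₀`, and lower the weight of every guard
seeing `p` by `ε`. Since `x` covers `p`, the fractional cost drops by at least `ε`. Take a cover of
the remaining points for the lowered weights, add `g₀` to it for free, and keep only the leftmost
of its guards that see `p`, which replaces all the others. Exactly one chosen guard now sees `p`,
so restoring the weights costs exactly `ε`.
-/

open scoped Classical

section Lines

variable {𝕜 : Type*}

lemma exists_line_through [Field 𝕜] {a b : 𝕜} (hab : a ≠ b) (u v : 𝕜) :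
    ∃ m k, m * a + k = u ∧ m * b + k = v := by
  have hba : b - a ≠ 0 := sub_ne_zero.2 hab.symm
  refine ⟨(v - u) / (b - a), u - (v - u) / (b - a) * a, by ring, ?_⟩
  field_simp
  ring

variable [CommRing 𝕜] [LinearOrder 𝕜] [IsStrictOrderedRing 𝕜] {m k m' k' a b z : 𝕜}

lemma slope_le_of_lines_cross (hab : a < b) (ha : m' * a + k' ≤ m * a + k)
    (hb : m * b + k ≤ m' * b + k') : m ≤ m' := by
  have hmul : m * (b - a) ≤ m' * (b - a) := by linarith
  exact le_of_mul_le_mul_right hmul (sub_pos.2 hab)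

lemma line_le_line_of_mem_Icc (ha : m * a + k ≤ m' * a + k') (hb : m * b + k ≤ m' * b + k')
    (hz : z ∈ Set.Icc a b) : m * z + k ≤ m' * z + k' := by
  rcases le_total m m' with hm | hm
  · linarith [mul_le_mul_of_nonneg_right hm (sub_nonneg.2 hz.1)]
  · linarith [mul_le_mul_of_nonneg_right hm (sub_nonneg.2 hz.2)]

end Lines

section Visibility

variable {f : ℝ → ℝ} {a b c d m k : ℝ}

lemma sees_iff_forall_le_line (hab : a ≤ b) (ha : m * a + k = f a) (hb : m * b + k = f b) :
    Sees f a b ↔ ∀ z ∈ Set.Icc a b, f z ≤ m * z + k := by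
  have hchord (t : ℝ) : (1 - t) * f a + t * f b = m * ((1 - t) * a + t * b) + k := by
    rw [← ha, ← hb]
    ring
  simp only [← segment_eq_Icc hab, segment_eq_image, Set.forall_mem_image, smul_eq_mul, Sees,
    hchord]

lemma Sees.order_claim (hab : a ≤ b) (hbc : b < c) (hcd : c ≤ d)
    (hac : Sees f a c) (hbd : Sees f b d) : Sees f a d := by
  obtain ⟨m₁, k₁, h₁a, h₁c⟩ := exists_line_through (hab.trans_lt hbc).ne (f a) (f c)
  obtain ⟨m₂, k₂, h₂b, h₂d⟩ := exists_line_through (hbc.trans_le hcd).ne (f b) (f d)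
  obtain ⟨m, k, ha, hd⟩ := exists_line_through (hab.trans_lt (hbc.trans_le hcd)).ne (f a) (f d)
  rw [sees_iff_forall_le_line (hab.trans hbc.le) h₁a h₁c] at hac
  rw [sees_iff_forall_le_line (hbc.le.trans hcd) h₂b h₂d] at hbd
  rw [sees_iff_forall_le_line (hab.trans (hbc.le.trans hcd)) ha hd]
  have h₂₁b : m₂ * b + k₂ ≤ m₁ * b + k₁ := h₂b.trans_le (hac b ⟨hab, hbc.le⟩)
  have h₁₂c : m₁ * c + k₁ ≤ m₂ * c + k₂ := h₁c.trans_le (hbd c ⟨hbc.le, hcd⟩)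
  have hm : m₁ ≤ m₂ := slope_le_of_lines_cross hbc h₂₁b h₁₂c
  have h₂₁a : m₂ * a + k₂ ≤ m₁ * a + k₁ := by
    linarith [mul_le_mul_of_nonneg_right hm (sub_nonneg.2 hab)]
  have h₁₂d : m₁ * d + k₁ ≤ m₂ * d + k₂ := by
    linarith [mul_le_mul_of_nonneg_right hm (sub_nonneg.2 hcd)]
  intro z hz
  rcases le_total z c with hzc | hcz
  · calc f z ≤ m₁ * z + k₁ := hac z ⟨hz.1, hzc⟩
      _ ≤ m * z + k := line_le_line_of_mem_Icc (by linarith) (by linarith) hz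
  · calc f z ≤ m₂ * z + k₂ := hbd z ⟨hbc.le.trans hcz, hz.2⟩
      _ ≤ m * z + k := line_le_line_of_mem_Icc (by linarith) (by linarith) hz

end Visibility

/-- The consequence of the order claim on which integrality rests, for an abstract visibility
relation `R` between guards and points: among the guards seeing `p`, one further left sees every
point right of `p` that one further right sees. -/
def LeftDominant {α β : Type*} [Preorder α] [Preorder β] (R : α → β → Prop) : Prop :=
  ∀ ⦃a b : α⦄ ⦃p q : β⦄, a ≤ b → p ≤ q → R a p → R b p → R b q → R a q

lemma leftDominant_seesLeft (f : ℝ → ℝ) : LeftDominant (SeesLeft f) :=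
  fun _ _ _ _ hab hpq hap hbp hbq =>
    ⟨hap.1.trans_le hpq, Sees.order_claim hab hbp.1 hpq hap.2 hbq.2⟩

section ResidualWeight

variable {α M : Type*}

/-- The weight `w` lowered by `ε` on the elements satisfying `P`, as in one step of the
local-ratio method. -/
def residualWeight [AddGroup M] (P : α → Prop) [DecidablePred P] (w : α → M) (ε : M) (g : α) : M :=
  w g - if P g then ε else 0

variable {P : α → Prop} [DecidablePred P]

lemma residualWeight_nonneg [AddCommGroup M] [PartialOrder M] [IsOrderedAddMonoid M] {w : α → M}
    {ε : M} {g : α} (hw : 0 ≤ w g) (hε : P g → ε ≤ w g) : 0 ≤ residualWeight P w ε g := by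
  by_cases hg : P g
  · simpa [residualWeight, hg] using hε hg
  · simpa [residualWeight, hg] using hw

lemma sum_residualWeight [AddCommGroup M] (A : Finset α) (w : α → M) (ε : M) :
    ∑ g ∈ A, residualWeight P w ε g = ∑ g ∈ A, w g - (A.filter P).card • ε := by
  simp [residualWeight, Finset.sum_sub_distrib, ← Finset.sum_filter]

lemma sum_residualWeight_mul_add_le [Ring M] [PartialOrder M] [IsOrderedRing M] {G : Finset α}
    {x : α → M} (w : α → M) {ε : M} (hε : 0 ≤ ε) (hx : 1 ≤ ∑ g ∈ G, if P g then x g else 0) :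
    ∑ g ∈ G, residualWeight P w ε g * x g + ε ≤ ∑ g ∈ G, w g * x g := by
  have hsum : ∑ g ∈ G, residualWeight P w ε g * x g
      = ∑ g ∈ G, w g * x g - ε * ∑ g ∈ G, if P g then x g else 0 := by
    simp [residualWeight, sub_mul, Finset.sum_sub_distrib, Finset.mul_sum]
  rw [hsum, sub_add, sub_le_self_iff, sub_nonneg]
  exact le_mul_of_one_le_right hε hx

end ResidualWeight

section Rounding

variable {α β : Type*} [LinearOrder α] {R : α → β → Prop} [DecidableRel R]

lemma LeftDominant.exists_subset_cover_card_filter_eq_one [Preorder β] (hR : LeftDominant R)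
    {N : Set β} {p : β} (hp : IsLeast N p) {C : Finset α} (hC : ∀ q ∈ N, ∃ g ∈ C, R g q) :
    ∃ A ⊆ C, (∀ q ∈ N, ∃ g ∈ A, R g q) ∧ (A.filter (R · p)).card = 1 := by
  obtain ⟨l, hl, hleftmost⟩ := Finset.exists_min_image (C.filter (R · p)) id
    (Finset.filter_nonempty_iff.2 (hC p hp.1))
  obtain ⟨hlC, hlp⟩ := Finset.mem_filter.1 hl
  refine ⟨C.filter fun g => R g p → g = l, Finset.filter_subset _ _, fun q hq => ?_, ?_⟩
  · obtain ⟨g, hgC, hgq⟩ := hC q hq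
    by_cases hgp : R g p
    · have hlg : l ≤ g := hleftmost g (Finset.mem_filter.2 ⟨hgC, hgp⟩)
      exact ⟨l, by simp [hlC], hR hlg (hp.2 hq) hlp hgp hgq⟩
    · exact ⟨g, by simp [hgC, hgp], hgq⟩
  · refine Finset.card_eq_one.2 ⟨l, ?_⟩
    ext g
    simp only [Finset.mem_filter, Finset.mem_singleton]
    grind

lemma LeftDominant.exists_insert_cover_sum_le [Preorder β] [DecidableEq β] {M : Type*}
    [AddCommGroup M] [PartialOrder M] [IsOrderedAddMonoid M] (hR : LeftDominant R)
    {G B : Finset α} {N : Finset β} {w : α → M} {p : β} {g₀ : α} (hp : ∀ q ∈ N, p ≤ q)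
    (hw : ∀ g ∈ G, 0 ≤ w g) (hg₀G : g₀ ∈ G) (hg₀p : R g₀ p)
    (hg₀min : ∀ g ∈ G, R g p → w g₀ ≤ w g) (hBG : B ⊆ G) (hBN : ∀ q ∈ N, ∃ g ∈ B, R g q) :
    ∃ A ⊆ G, (∀ q ∈ insert p N, ∃ g ∈ A, R g q) ∧
      ∑ g ∈ A, w g ≤ ∑ g ∈ B, residualWeight (R · p) w (w g₀) g + w g₀ := by
  set w' := residualWeight (R · p) w (w g₀) with hw'_def
  have hw' : ∀ g ∈ G, 0 ≤ w' g :=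
    fun g hg => residualWeight_nonneg (hw g hg) (hg₀min g hg)
  have hw'g₀ : w' g₀ = 0 := by simp [hw'_def, residualWeight, hg₀p]
  have hCG : insert g₀ B ⊆ G := Finset.insert_subset hg₀G hBG
  have hCN : ∀ q ∈ insert p N, ∃ g ∈ insert g₀ B, R g q :=
    (Finset.forall_mem_insert _ _ _).2 ⟨⟨g₀, Finset.mem_insert_self g₀ B, hg₀p⟩,
      fun q hq => (hBN q hq).imp fun _ hg => hg.imp_left Finset.mem_insert_of_mem⟩
  have hleast : IsLeast (insert p N : Finset β) p :=
    ⟨by simp, by simpa [mem_lowerBounds] using hp⟩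
  obtain ⟨A, hAC, hAN, hAp⟩ := hR.exists_subset_cover_card_filter_eq_one hleast hCN
  refine ⟨A, hAC.trans hCG, hAN, ?_⟩
  calc ∑ g ∈ A, w g
      = ∑ g ∈ A, w' g + w g₀ := by simp [hw'_def, sum_residualWeight, hAp]
    _ ≤ ∑ g ∈ insert g₀ B, w' g + w g₀ := by
        gcongr ?_ + _
        exact Finset.sum_le_sum_of_subset_of_nonneg hAC fun g hg _ => hw' g (hCG hg)
    _ = ∑ g ∈ B, w' g + w g₀ := by
        rw [Finset.sum_insert_of_eq_zero_if_notMem fun _ => hw'g₀]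

theorem LeftDominant.exists_cover_sum_le [LinearOrder β] {𝕜 : Type*} [Ring 𝕜]
    [LinearOrder 𝕜] [IsStrictOrderedRing 𝕜] (hR : LeftDominant R)
    (G : Finset α) (N : Finset β) {w x : α → 𝕜} (hw : ∀ g ∈ G, 0 ≤ w g)
    (hx : ∀ g ∈ G, 0 ≤ x g)
    (hcov : ∀ p ∈ N, 1 ≤ ∑ g ∈ G, if R g p then x g else 0) :
    ∃ A ⊆ G, (∀ p ∈ N, ∃ g ∈ A, R g p) ∧ ∑ g ∈ A, w g ≤ ∑ g ∈ G, w g * x g := by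
  induction N using Finset.induction_on_min generalizing w with
  | empty =>
    exact ⟨∅, G.empty_subset, by simp,
      by simpa using Finset.sum_nonneg fun g hg => mul_nonneg (hw g hg) (hx g hg)⟩
  | insert p N hp ih =>
    obtain ⟨hcovp, hcovN⟩ := (Finset.forall_mem_insert _ _ _).1 hcov
    have hseen : (G.filter (R · p)).Nonempty := by
      rw [← Finset.sum_filter] at hcovp
      exact Finset.nonempty_of_sum_ne_zero (zero_lt_one.trans_le hcovp).ne'
    obtain ⟨g₀, hg₀, hmin⟩ := Finset.exists_min_image _ w hseen
    obtain ⟨hg₀G, hg₀p⟩ := Finset.mem_filter.1 hg₀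
    have hg₀min : ∀ g ∈ G, R g p → w g₀ ≤ w g :=
      fun g hg hgp => hmin g (Finset.mem_filter.2 ⟨hg, hgp⟩)
    have hresidual : ∀ g ∈ G, 0 ≤ residualWeight (R · p) w (w g₀) g :=
      fun g hg => residualWeight_nonneg (hw g hg) (hg₀min g hg)
    obtain ⟨B, hBG, hBN, hBw⟩ := ih hresidual hcovN
    obtain ⟨A, hAG, hAN, hAw⟩ := hR.exists_insert_cover_sum_le (fun q hq => (hp q hq).le)
      hw hg₀G hg₀p hg₀min hBG hBN
    refine ⟨A, hAG, hAN, ?_⟩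
    calc ∑ g ∈ A, w g
        ≤ ∑ g ∈ B, residualWeight (R · p) w (w g₀) g + w g₀ := hAw
      _ ≤ ∑ g ∈ G, residualWeight (R · p) w (w g₀) g * x g + w g₀ := by gcongr
      _ ≤ ∑ g ∈ G, w g * x g := sum_residualWeight_mul_add_le w (hw g₀ hg₀G) hcovp

end Rounding

/-- The LP relaxation of the left-guarding problem is integral. -/
theorem left_guarding_LP_integral (f : ℝ → ℝ) (G N : Finset ℝ) (w x : ℝ → ℝ)
    (hw : ∀ g ∈ G, 0 ≤ w g) (hx : ∀ g ∈ G, 0 ≤ x g)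
    (hcov : ∀ p ∈ N, 1 ≤ ∑ g ∈ G, if SeesLeft f g p then x g else 0) :
    ∃ A ⊆ G, (∀ p ∈ N, ∃ g ∈ A, SeesLeft f g p) ∧
      ∑ g ∈ A, w g ≤ ∑ g ∈ G, w g * x g :=
  (leftDominant_seesLeft f).exists_cover_sum_le G N hw hx hcov
end
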